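/- Let w be a weight function on [-1,1], let (π_k)_{k≤n} be orthonormal polynomials for w satisfying the three-term recurrence with Jacobi matrix J_n, and let (λ_i, ν_i)_{i<n} be an n-point Gauss quadrature rule for w whose nodes are zeros of π_n. Let every entry A_{kl} (k,l < N) of A and every entry b_k of b be a real polynomial, assume A(λ_i) is invertible for each i < n, and let X_p be the N×n pseudospectral coefficient matrix with columns X_p(:,j) = Σ_{i<n} ν_i A(λ_i)⁻¹ b(λ_i) π_j(λ_i). Then for all k < N and i < n: Σ_{l<N} Σ_{j<n} (A_{kl}(J_n))_{ij} · X_p(l,j) = (b_k(J_n))_{i,0}, where p(J_n) denotes evaluation of the polynomial p at the matrix J_n and the subscript (i,0) denotes the entry in row i of the first column. In block form, A(J_n) vec(X_pᵀ) = b(J_n) e_0. -/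

import Mathlib

open MeasureTheory Polynomial Matrix

/-- The `n × n` symmetric tridiagonal Jacobi matrix with diagonal entries
`α 0, …, α (n-1)` and off-diagonal entries `β 1, …, β (n-1)`. -/
def jacobiMatrix (α β : ℕ → ℝ) (n : ℕ) : Matrix (Fin n) (Fin n) ℝ :=
  Matrix.of fun i j =>
    if (i : ℕ) = (j : ℕ) then α (i : ℕ)
    else if (i : ℕ) + 1 = (j : ℕ) ∨ (j : ℕ) + 1 = (i : ℕ) then β (max (i : ℕ) (j : ℕ))
    else 0

/-- The Jacobi matrix acts on a sequence satisfying the recurrence with `f n = 0` by scaling. -/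
lemma jacobi_mulVec_aux (α β : ℕ → ℝ) (n : ℕ) (f : ℕ → ℝ) (x : ℝ)
    (hrec : ∀ k, β (k + 1) * f (k + 1)
      = (x - α k) * f k - β k * (if k = 0 then 0 else f (k - 1)))
    (hz : f n = 0) :
    jacobiMatrix α β n *ᵥ (fun j : Fin n => f j) = x • (fun j : Fin n => f j) := by
  funext i
  have hi := i.2
  simp only [Matrix.mulVec, dotProduct, jacobiMatrix, Matrix.of_apply, Pi.smul_apply, smul_eq_mul]
  rw [Fin.sum_univ_eq_sum_range (fun j => (if (i : ℕ) = j then α (i : ℕ)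
    else if (i : ℕ) + 1 = j ∨ j + 1 = (i : ℕ) then β (max (i : ℕ) j) else 0) * f j) n]
  have h1 : ∀ j ∈ Finset.range n, (if (i : ℕ) = j then α (i : ℕ)
      else if (i : ℕ) + 1 = j ∨ j + 1 = (i : ℕ) then β (max (i : ℕ) j) else 0) * f j
      = (if (i : ℕ) = j then α i * f i else 0)
        + (if (i : ℕ) + 1 = j then β (i + 1) * f (i + 1) else 0)
        + (if (i : ℕ) - 1 = j then β i * (if (i : ℕ) = 0 then 0 else f (i - 1)) else 0) := by
    intro j _
    rcases lt_trichotomy (i : ℕ) j with h | h | h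
    · by_cases h' : (i : ℕ) + 1 = j
      · subst h'
        simp [show ¬ ((i : ℕ) - 1 = i + 1) by omega]
      · simp [h', show ¬ ((i : ℕ) = j) by omega, show ¬ (j + 1 = (i : ℕ)) by omega,
          show ¬ ((i : ℕ) - 1 = j) by omega]
    · subst h
      by_cases h0 : (i : ℕ) = 0
      · simp [h0]
      · simp [show ¬ ((i : ℕ) - 1 = i) by omega]
    · by_cases h' : j + 1 = (i : ℕ)
      · rw [← h']
        simp [show ¬ (j + 1 + 1 = j) by omega]
      · simp [h', show ¬ ((i : ℕ) = j) by omega, show ¬ ((i : ℕ) + 1 = j) by omega,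
          show ¬ ((i : ℕ) - 1 = j) by omega]
  rw [Finset.sum_congr rfl h1, Finset.sum_add_distrib, Finset.sum_add_distrib,
    Finset.sum_ite_eq, Finset.sum_ite_eq, Finset.sum_ite_eq]
  have h2 : (if (i : ℕ) + 1 ∈ Finset.range n then β (i + 1) * f (i + 1) else 0)
      = β (i + 1) * f (i + 1) := by
    by_cases h : (i : ℕ) + 1 = n
    · simp [h, hz]
    · rw [if_pos (by rw [Finset.mem_range]; omega)]
  rw [h2, if_pos (by rw [Finset.mem_range]; omega), if_pos (by rw [Finset.mem_range]; omega), hrec]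
  ring

/-- Polynomials of a matrix act on eigenvectors by evaluation. -/
lemma aeval_mulVec_aux {n : ℕ} (J : Matrix (Fin n) (Fin n) ℝ) (v : Fin n → ℝ) (x : ℝ)
    (h : J *ᵥ v = x • v) (p : Polynomial ℝ) :
    (Polynomial.aeval J p) *ᵥ v = p.eval x • v := by
  induction p using Polynomial.induction_on' with
  | add p q hp hq => rw [map_add, Matrix.add_mulVec, hp, hq, eval_add, add_smul]
  | monomial m a =>
    have hm : (J ^ m) *ᵥ v = x ^ m • v := by
      induction m with
      | zero => simp
      | succ m ih =>
        rw [pow_succ, ← Matrix.mulVec_mulVec, h, Matrix.mulVec_smul, ih, smul_smul, pow_succ,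
          mul_comm]
    rw [aeval_monomial, ← Algebra.smul_def, Matrix.smul_mulVec, hm, eval_monomial, smul_smul]

/-- **The pseudospectral coefficients satisfy `A(Jₙ) vec(Xpᵀ) = b(Jₙ) e₀`.**
With orthonormal polynomials `π` for a weight `w` on `[-1,1]`, three-term recurrence
coefficients `α`, `β`, an `n`-point Gauss rule whose nodes are zeros of `π n`, and
`A`, `b` with polynomial entries (`A (lam i)` invertible), the pseudospectral
coefficient matrix `Xp` satisfies, blockwise,
`∑ l ∑ j (A k l)(Jₙ)_{i j} * Xp l j = (b k)(Jₙ)_{i 0}`. -/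
theorem pseudospectral_jacobi_system
    (n N : ℕ) (hn : 0 < n) (w : ℝ → ℝ)
    (hw_pos : ∀ s ∈ Set.Icc (-1 : ℝ) 1, 0 < w s)
    (hw_norm : (∫ s in (-1 : ℝ)..1, w s) = 1)
    (π : ℕ → Polynomial ℝ)
    (hπ0 : π 0 = 1)
    (hπdeg : ∀ k, (π k).degree = (k : ℕ))
    (hπorth : ∀ j k : ℕ, (∫ s in (-1 : ℝ)..1, (π j).eval s * (π k).eval s * w s)
      = if j = k then (1 : ℝ) else 0)
    (α β : ℕ → ℝ) (hβ : ∀ k : ℕ, 0 < β (k + 1))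
    (hrec : ∀ (k : ℕ) (s : ℝ), β (k + 1) * (π (k + 1)).eval s
      = (s - α k) * (π k).eval s - β k * (if k = 0 then 0 else (π (k - 1)).eval s))
    (lam ν : Fin n → ℝ)
    (hlam_mem : ∀ i, lam i ∈ Set.Icc (-1 : ℝ) 1)
    (hlam_inj : Function.Injective lam)
    (hν_pos : ∀ i, 0 < ν i)
    (hexact : ∀ p : Polynomial ℝ, p.degree < (2 * n : ℕ) →
      (∫ s in (-1 : ℝ)..1, p.eval s * w s) = ∑ i, ν i * p.eval (lam i))
    (hzeros : ∀ i, (π n).eval (lam i) = 0)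
    (A : Fin N → Fin N → Polynomial ℝ) (b : Fin N → Polynomial ℝ)
    (hAinv : ∀ i : Fin n, IsUnit (Matrix.of fun k l : Fin N => (A k l).eval (lam i)))
    (Xp : Matrix (Fin N) (Fin n) ℝ)
    (hXp : ∀ (l : Fin N) (j : Fin n),
      Xp l j = ∑ i : Fin n,
        ν i * (((Matrix.of fun k l' : Fin N => (A k l').eval (lam i))⁻¹
            *ᵥ fun k => (b k).eval (lam i)) l) * (π (j : ℕ)).eval (lam i)) :
    ∀ (k : Fin N) (i : Fin n),
      (∑ l : Fin N, ∑ j : Fin n,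
        (Polynomial.aeval (jacobiMatrix α β n) (A k l)) i j * Xp l j)
      = (Polynomial.aeval (jacobiMatrix α β n) (b k)) i ⟨0, hn⟩ := by
  intro k i
  have hJ : ∀ (p : Polynomial ℝ) (m : Fin n),
      ∑ j : Fin n, (Polynomial.aeval (jacobiMatrix α β n) p) i j * (π (j : ℕ)).eval (lam m)
        = p.eval (lam m) * (π (i : ℕ)).eval (lam m) := by
    intro p m
    exact congrFun (aeval_mulVec_aux _ _ _ (jacobi_mulVec_aux α β n
      (fun j => (π j).eval (lam m)) (lam m) (fun k => hrec k (lam m)) (hzeros m)) p) i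
  have hE : ∀ j : Fin n, ∑ m, ν m * (π (j : ℕ)).eval (lam m)
      = if j = ⟨0, hn⟩ then 1 else 0 := by
    intro j
    have hj := j.2
    rw [← hexact _ (by rw [hπdeg]; exact_mod_cast (by omega : (j : ℕ) < 2 * n))]
    have := hπorth j 0
    simpa [hπ0, Fin.ext_iff] using this
  have hR : (Polynomial.aeval (jacobiMatrix α β n) (b k)) i ⟨0, hn⟩
      = ∑ m, ν m * ((b k).eval (lam m) * (π (i : ℕ)).eval (lam m)) := by
    calc _ = ∑ j, (Polynomial.aeval (jacobiMatrix α β n) (b k)) i j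
          * (if j = ⟨0, hn⟩ then 1 else 0) := by simp
      _ = ∑ j, ∑ m, ν m * ((Polynomial.aeval (jacobiMatrix α β n) (b k)) i j
          * (π (j : ℕ)).eval (lam m)) := by
        refine Finset.sum_congr rfl fun j _ => ?_
        rw [← hE j, Finset.mul_sum]
        exact Finset.sum_congr rfl fun m _ => by ring
      _ = _ := by
        rw [Finset.sum_comm]
        refine Finset.sum_congr rfl fun m _ => ?_
        rw [← Finset.mul_sum, hJ]
  rw [hR]
  set y : Fin n → Fin N → ℝ := fun m => (Matrix.of fun k l' : Fin N => (A k l').eval (lam m))⁻¹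
            *ᵥ fun k => (b k).eval (lam m) with hy
  have hAy : ∀ m, ∑ l, (A k l).eval (lam m) * y m l = (b k).eval (lam m) := by
    intro m
    have h : (Matrix.of fun k l : Fin N => (A k l).eval (lam m)) *ᵥ y m
        = fun k => (b k).eval (lam m) := by
      rw [hy]
      simp only
      rw [Matrix.mulVec_mulVec, Matrix.mul_nonsing_inv _
        ((Matrix.isUnit_iff_isUnit_det _).1 (hAinv m)), Matrix.one_mulVec]
    exact congrFun h k
  calc _ = ∑ l, ∑ m, ν m * (y m l * ((A k l).eval (lam m) * (π (i : ℕ)).eval (lam m))) := by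
        refine Finset.sum_congr rfl fun l _ => ?_
        simp_rw [← hJ, hXp, Finset.mul_sum]
        rw [Finset.sum_comm]
        refine Finset.sum_congr rfl fun m _ => Finset.sum_congr rfl fun j _ => ?_
        simp only [hy]
        ring
    _ = _ := by
        rw [Finset.sum_comm]
        refine Finset.sum_congr rfl fun m _ => ?_
        rw [← hAy m, Finset.sum_mul, Finset.mul_sum]
        exact Finset.sum_congr rfl fun l _ => by ring
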